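/- Every triangle-free induced subgraph of the triangular lattice is (2a,a)-choosable for every positive integer a, i.e., it is (a,b)-choosable whenever a/b ≥ 5/2; in particular it is (5,2)-choosable and (7,3)-colorable. -/

import Mathlib

def triLattice : SimpleGraph (ℤ × ℤ) :=
  SimpleGraph.fromRel (fun p q =>
    q - p ∈ ({(1, 0), (-1, 0), (0, 1), (0, -1), (-1, 1), (1, -1)} : Set (ℤ × ℤ)))

def Choosable {V : Type*} (G : SimpleGraph V) (a b : ℕ) : Prop :=
  ∀ L : V → Finset ℕ, (∀ v, (L v).card = a) →
    ∃ c : V → Finset ℕ, (∀ v, c v ⊆ L v ∧ (c v).card = b) ∧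
      ∀ u v, G.Adj u v → Disjoint (c u) (c v)

/-!
By compactness it suffices to colour finite triangle-free subsets `R` of the lattice, which is done
by removing from `R` an induced path with an even number of edges such that the vertices in even
position have at most one neighbour in `R` off the path and those in odd position have none. When
the rest of `R` is coloured, the remaining lists on the path have sizes alternately at least
`a - b` and at least `a`, and the path can be coloured from such lists when `5 * b ≤ 2 * a`.

To find the path, consider the vertices of `R` on the highest line `y - x = m`. If one of them has
at most one neighbour in `R`, it is itself such a path. Otherwise each `(x, y)` of them has exactly
the neighbours `(x + 1, y)` and `(x, y - 1)`, and the vertices of a maximal run of consecutive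
points of the line, interleaved with these neighbours, form a zigzag path.
-/

section SetSystems

variable {α : Type*} [DecidableEq α]

open scoped Finset

lemma card_inter_union_add (A A' B : Finset α) :
    #(B ∩ (A ∪ A')) + (#(A \ B) + #(A' \ B) + #(A ∩ A' ∩ B)) = #A + #A' := by
  have hA : #(A \ B) + #(A ∩ B) = #A := Finset.card_sdiff_add_card_inter A B
  have hA' : #(A' \ B) + #(A' ∩ B) = #A' := Finset.card_sdiff_add_card_inter A' B
  have hAA' : #(A ∩ B ∪ A' ∩ B) + #(A ∩ B ∩ (A' ∩ B)) = #(A ∩ B) + #(A' ∩ B) :=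
    Finset.card_union_add_card_inter _ _
  rw [← Finset.union_inter_distrib_right, Finset.inter_comm _ B,
    ← Finset.inter_inter_distrib_right] at hAA'
  omega

lemma exists_subset_forall_card_inter_union_add_le {A A' B : Finset α} {s : ℕ}
    (h : #B + s ≤ #A + #A') :
    ∃ E ⊆ A, ∃ E' ⊆ A', #E ≤ s ∧ #E' ≤ s ∧
      ∀ C C', E ⊆ C → E' ⊆ C' → #(B ∩ (C ∪ C')) + s ≤ #C + #C' := by
  have hs : s ≤ #(A \ B) + #(A' \ B) + #(A ∩ A' ∩ B) := by
    have := card_inter_union_add A A' B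
    have := Finset.card_le_card (Finset.inter_subset_left : B ∩ (A ∪ A') ⊆ B)
    omega
  obtain ⟨p, q, m, hp, hq, hm, hpqm⟩ : ∃ p q m, p ≤ #(A \ B) ∧ q ≤ #(A' \ B) ∧
      m ≤ #(A ∩ A' ∩ B) ∧ p + q + m = s :=
    ⟨min #(A \ B) s, min #(A' \ B) (s - #(A \ B)), s - #(A \ B) - #(A' \ B), by omega⟩
  obtain ⟨P, hPsub, rfl⟩ := Finset.exists_subset_card_eq hp
  obtain ⟨Q, hQsub, rfl⟩ := Finset.exists_subset_card_eq hq
  obtain ⟨M, hMsub, rfl⟩ := Finset.exists_subset_card_eq hm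
  refine ⟨P ∪ M, by grind, Q ∪ M, by grind, ?_, ?_, fun C C' hC hC' => ?_⟩
  · exact (Finset.card_union_le P M).trans (by omega)
  · exact (Finset.card_union_le Q M).trans (by omega)
  · have hP : #P ≤ #(C \ B) := Finset.card_le_card (by grind)
    have hQ : #Q ≤ #(C' \ B) := Finset.card_le_card (by grind)
    have hM : #M ≤ #(C ∩ C' ∩ B) := Finset.card_le_card (by grind)
    have := card_inter_union_add C C' B
    omega

end SetSystems

section Multicoloring

open scoped Finset

variable {V W α : Type*} {G : SimpleGraph V} {S T R : Set V} {L : V → Finset α} {a b : ℕ}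

/-- `c` is a proper `b`-fold colouring from the lists `L` of the subgraph of `G` induced by `S`.
Both `L` and `c` are defined on all vertices, and their values outside `S` are irrelevant. -/
structure IsMulticoloringOn (G : SimpleGraph V) (S : Set V) (L : V → Finset α) (b : ℕ)
    (c : V → Finset α) : Prop where
  subset : ∀ v ∈ S, c v ⊆ L v
  card_eq : ∀ v ∈ S, #(c v) = b
  disjoint : ∀ u ∈ S, ∀ v ∈ S, G.Adj u v → Disjoint (c u) (c v)

/-- The subgraph of `G` induced by `S` has a proper `b`-fold colouring from the lists `L`. -/
def MulticolorableOn (G : SimpleGraph V) (S : Set V) (L : V → Finset α) (b : ℕ) : Prop :=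
  ∃ c, IsMulticoloringOn G S L b c

lemma MulticolorableOn.mono (hST : S ⊆ T) (h : MulticolorableOn G T L b) :
    MulticolorableOn G S L b := by
  obtain ⟨c, hc⟩ := h
  exact ⟨c, fun v hv => hc.subset v (hST hv), fun v hv => hc.card_eq v (hST hv),
    fun u hu v hv => hc.disjoint u (hST hu) v (hST hv)⟩

lemma multicolorableOn_empty (G : SimpleGraph V) (L : V → Finset α) (b : ℕ) :
    MulticolorableOn G ∅ L b :=
  ⟨fun _ => ∅, by simp, by simp, by simp⟩

lemma IsMulticoloringOn.insert_update [DecidableEq V] {c : V → Finset α} {v : V} {C : Finset α}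
    (hc : IsMulticoloringOn G S L b c) (hv : v ∉ S) (hCL : C ⊆ L v) (hCb : #C = b)
    (hdisj : ∀ u ∈ S, G.Adj v u → Disjoint C (c u)) :
    IsMulticoloringOn G (insert v S) L b (Function.update c v C) := by
  have hupdate : ∀ u ∈ S, Function.update c v C u = c u := fun u hu =>
    Function.update_of_ne (ne_of_mem_of_not_mem hu hv) C c
  refine ⟨?_, ?_, ?_⟩
  · rintro u (rfl | hu)
    · rwa [Function.update_self]
    · exact hupdate u hu ▸ hc.subset u hu
  · rintro u (rfl | hu)
    · rwa [Function.update_self]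
    · exact hupdate u hu ▸ hc.card_eq u hu
  · rintro u (rfl | hu) w (rfl | hw) huw
    · exact absurd huw G.irrefl
    · rw [Function.update_self, hupdate w hw]
      exact hdisj w hw huw
    · rw [Function.update_self, hupdate u hu]
      exact (hdisj u hu huw.symm).symm
    · rw [hupdate u hu, hupdate w hw]
      exact hc.disjoint u hu w hw huw

lemma MulticolorableOn.image [Nonempty W] {H : SimpleGraph W} {S : Set W} {f : W → V}
    (hf : Set.InjOn f S) (hadj : ∀ i ∈ S, ∀ j ∈ S, G.Adj (f i) (f j) → H.Adj i j)
    (h : MulticolorableOn H S (L ∘ f) b) : MulticolorableOn G (f '' S) L b := by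
  obtain ⟨c, hc⟩ := h
  have hinv : ∀ i ∈ S, Function.invFunOn f S (f i) = i := hf.leftInvOn_invFunOn
  refine ⟨c ∘ Function.invFunOn f S, ?_, ?_, ?_⟩
  · rintro _ ⟨i, hi, rfl⟩
    simpa only [Function.comp_apply, hinv i hi] using hc.subset i hi
  · rintro _ ⟨i, hi, rfl⟩
    simpa only [Function.comp_apply, hinv i hi] using hc.card_eq i hi
  · rintro _ ⟨i, hi, rfl⟩ _ ⟨j, hj, rfl⟩ hij
    simpa only [Function.comp_apply, hinv i hi, hinv j hj] using
      hc.disjoint i hi j hj (hadj i hi j hj hij)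

open scoped Classical in
/-- The colours of the list `L v` which `c` does not use on the neighbours of `v` in `S`: what is
left of the lists when `S` has been coloured by `c`. -/
noncomputable def residualList (G : SimpleGraph V) (S : Set V) (L c : V → Finset α) (v : V) :
    Finset α :=
  {x ∈ L v | ∀ u ∈ S ∩ G.neighborSet v, x ∉ c u}

lemma mem_residualList {c : V → Finset α} {v : V} {x : α} :
    x ∈ residualList G S L c v ↔ x ∈ L v ∧ ∀ u ∈ S ∩ G.neighborSet v, x ∉ c u := by
  simp only [residualList, Finset.mem_filter]

lemma residualList_subset (G : SimpleGraph V) (S : Set V) (L c : V → Finset α) (v : V) :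
    residualList G S L c v ⊆ L v :=
  fun _ hx => (mem_residualList.1 hx).1

lemma disjoint_residualList {c : V → Finset α} {u v : V} (hu : u ∈ S) (huv : G.Adj u v) :
    Disjoint (c u) (residualList G S L c v) :=
  Finset.disjoint_left.2 fun _ hxu hxv => (mem_residualList.1 hxv).2 u ⟨hu, huv.symm⟩ hxu

lemma IsMulticoloringOn.card_sub_le_card_residualList {c : V → Finset α}
    (hc : IsMulticoloringOn G S L b c) {v : V} {n : ℕ}
    (hn : (S ∩ G.neighborSet v).encard ≤ n) :
    #(L v) - n * b ≤ #(residualList G S L c v) := by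
  classical
  obtain ⟨hfin, hcard⟩ := Set.encard_le_coe_iff_finite_ncard_le.1 hn
  set N := hfin.toFinset
  have hN : #N ≤ n := Set.ncard_eq_toFinset_card _ hfin ▸ hcard
  have hused : #(N.biUnion c) ≤ n * b :=
    (Finset.card_biUnion_le_card_mul N c b fun u hu =>
      (hc.card_eq u (hfin.mem_toFinset.1 hu).1).le).trans (Nat.mul_le_mul_right b hN)
  have hsub : L v \ N.biUnion c ⊆ residualList G S L c v := by
    intro x hx
    obtain ⟨hxL, hxN⟩ := Finset.mem_sdiff.1 hx
    exact mem_residualList.2 ⟨hxL, fun u hu hxu =>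
      hxN (Finset.mem_biUnion.2 ⟨u, hfin.mem_toFinset.2 hu, hxu⟩)⟩
  calc #(L v) - n * b ≤ #(L v) - #(N.biUnion c) := Nat.sub_le_sub_left hused _
    _ ≤ #(L v \ N.biUnion c) := Finset.le_card_sdiff _ _
    _ ≤ #(residualList G S L c v) := Finset.card_le_card hsub

lemma IsMulticoloringOn.multicolorableOn_union {c : V → Finset α}
    (hc : IsMulticoloringOn G S L b c)
    (hT : MulticolorableOn G T (residualList G S L c) b) : MulticolorableOn G (S ∪ T) L b := by
  classical
  obtain ⟨d, hd⟩ := hT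
  have hdisj : ∀ u ∈ S, ∀ v ∈ T, G.Adj u v → Disjoint (c u) (d v) := fun u hu v hv huv =>
    (disjoint_residualList hu huv).mono_right (hd.subset v hv)
  have hmem : ∀ v ∈ S ∪ T, v ∈ S ∨ v ∉ S ∧ v ∈ T := fun v hv => by
    by_cases hvS : v ∈ S
    · exact .inl hvS
    · exact .inr ⟨hvS, hv.resolve_left hvS⟩
  refine ⟨S.piecewise c d, fun v hv => ?_, fun v hv => ?_, fun u hu v hv huv => ?_⟩
  · rcases hmem v hv with hvS | ⟨hvS, hvT⟩
    · simpa only [Set.piecewise_eq_of_mem _ _ _ hvS] using hc.subset v hvS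
    · simpa only [Set.piecewise_eq_of_notMem _ _ _ hvS] using
        (hd.subset v hvT).trans (residualList_subset G S L c v)
  · rcases hmem v hv with hvS | ⟨hvS, hvT⟩
    · simpa only [Set.piecewise_eq_of_mem _ _ _ hvS] using hc.card_eq v hvS
    · simpa only [Set.piecewise_eq_of_notMem _ _ _ hvS] using hd.card_eq v hvT
  · rcases hmem u hu with huS | ⟨huS, huT⟩ <;> rcases hmem v hv with hvS | ⟨hvS, hvT⟩ <;>
      simp only [Set.piecewise_eq_of_mem, Set.piecewise_eq_of_notMem, huS, hvS, not_false_eq_true]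
    · exact hc.disjoint u huS v hvS huv
    · exact hdisj u huS v hvT huv
    · exact (hdisj v hvS u huT huv.symm).symm
    · exact hd.disjoint u huT v hvT huv

theorem multicolorableOn_of_forall_finite_subset
    (h : ∀ S ⊆ R, S.Finite → MulticolorableOn G S L b) : MulticolorableOn G R L b := by
  classical
  choose c hc using fun s : Finset V =>
    h (R ∩ s) Set.inter_subset_left (s.finite_toSet.inter_of_right R)
  obtain ⟨χ, hχ⟩ := Finset.rado_selection (β := fun v => (L v).powerset)
    fun s v => ⟨c s v ∩ L v, Finset.mem_powerset.2 Finset.inter_subset_right⟩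
  have hagree : ∀ s : Finset V, ∃ t, s ⊆ t ∧ ∀ v ∈ s, v ∈ R → (χ v : Finset α) = c t v := by
    intro s
    obtain ⟨t, hst, ht⟩ := hχ s
    refine ⟨t, hst, fun v hvs hvR => ?_⟩
    rw [ht v hvs]
    exact Finset.inter_eq_left.2 ((hc t).subset v ⟨hvR, hst hvs⟩)
  refine ⟨fun v => χ v, fun v _ => Finset.mem_powerset.1 (χ v).2, fun v hv => ?_,
    fun u hu v hv huv => ?_⟩
  · obtain ⟨t, hst, ht⟩ := hagree {v}
    have hvt : v ∈ t := hst (Finset.mem_singleton_self v)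
    simpa only [ht v (Finset.mem_singleton_self v) hv] using (hc t).card_eq v ⟨hv, hvt⟩
  · obtain ⟨t, hst, ht⟩ := hagree {u, v}
    have hu' : u ∈ ({u, v} : Finset V) := Finset.mem_insert_self u {v}
    have hv' : v ∈ ({u, v} : Finset V) := Finset.mem_insert_of_mem (Finset.mem_singleton_self v)
    simpa only [ht u hu' hu, ht v hv' hv] using
      (hc t).disjoint u ⟨hu, hst hu'⟩ v ⟨hv, hst hv'⟩ huv

lemma choosable_induce_of_multicolorableOn
    (h : ∀ L : V → Finset ℕ, (∀ v ∈ R, #(L v) = a) → MulticolorableOn G R L b) :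
    Choosable (G.induce R) a b := by
  intro L hL
  have hext : ∀ v : R, Function.extend Subtype.val L (fun _ => ∅) v = L v :=
    Subtype.val_injective.extend_apply L _
  obtain ⟨c, hc⟩ := h (Function.extend Subtype.val L fun _ => ∅)
    fun v hv => (congrArg Finset.card (hext ⟨v, hv⟩)).trans (hL ⟨v, hv⟩)
  exact ⟨fun v => c v, fun v => ⟨hext v ▸ hc.subset v v.2, hc.card_eq v v.2⟩,
    fun u v huv => hc.disjoint u u.2 v v.2 huv⟩

end Multicoloring

section Path

open scoped Finset

variable {V α : Type*} {a b : ℕ}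

lemma hasse_nat_adj {i j : ℕ} : (SimpleGraph.hasse ℕ).Adj i j ↔ i + 1 = j ∨ j + 1 = i := by
  simp only [SimpleGraph.hasse_adj, Nat.covBy_iff_add_one_eq]

lemma IsMulticoloringOn.update_path {L c : ℕ → Finset α} {n : ℕ} {C : Finset α}
    (hc : IsMulticoloringOn (SimpleGraph.hasse ℕ) (Set.Iic n) L b c)
    (hCL : C ⊆ L (n + 1)) (hCb : #C = b) (hdisj : Disjoint C (c n)) :
    IsMulticoloringOn (SimpleGraph.hasse ℕ) (Set.Iic (n + 1)) L b
      (Function.update c (n + 1) C) := by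
  have hinsert : Set.Iic (n + 1) = insert (n + 1) (Set.Iic n) := Order.Iic_succ n
  rw [hinsert]
  refine hc.insert_update (by simp) hCL hCb fun i hi hadj => ?_
  obtain rfl : i = n := by
    rw [Set.mem_Iic] at hi
    rw [hasse_nat_adj] at hadj
    omega
  exact hdisj

/-- The bound on `F` leaves room in `C` for the at most `3 * b - a` further colours that the next
two vertices of the path ask for, which is what lets the induction proceed. -/
lemma exists_forcing_subset_path (hab : 5 * b ≤ 2 * a) {L : ℕ → Finset α} (k : ℕ)
    (heven : ∀ i ≤ 2 * k, Even i → a - b ≤ #(L i)) (hodd : ∀ i ≤ 2 * k, Odd i → a ≤ #(L i)) :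
    ∃ F ⊆ L (2 * k), #F ≤ 3 * b - a ∧ ∀ C, F ⊆ C → C ⊆ L (2 * k) → #C = b →
      ∃ c, IsMulticoloringOn (SimpleGraph.hasse ℕ) (Set.Iic (2 * k)) L b c ∧ c (2 * k) = C := by
  classical
  induction k with
  | zero =>
    refine ⟨∅, Finset.empty_subset _, Nat.zero_le _, fun C _ hCL hCb => ⟨fun _ => C, ?_, rfl⟩⟩
    have hzero : ∀ i ∈ Set.Iic (2 * 0), i = 0 := fun i hi => Nat.le_zero.1 hi
    refine ⟨fun i hi => hzero i hi ▸ hCL, fun _ _ => hCb, fun i hi j hj hij => ?_⟩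
    exact absurd ((hzero i hi).trans (hzero j hj).symm) hij.ne
  | succ k ih =>
    obtain ⟨F, hFL, hFcard, hF⟩ := ih (fun i hi => heven i (by omega))
      (fun i hi => hodd i (by omega))
    have hA : a - b ≤ #(L (2 * k)) := heven _ (by omega) (even_two_mul k)
    have hA' : a - b ≤ #(L (2 * k + 2)) := heven _ (by omega) (even_two_mul (k + 1))
    obtain ⟨B, hBL, hB⟩ := Finset.exists_subset_card_eq
      (hodd (2 * k + 1) (by omega) (odd_two_mul_add_one k))
    obtain ⟨E, hEL, E', hE'L, hE, hE', hforce⟩ := exists_subset_forall_card_inter_union_add_le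
      (by omega : #B + (3 * b - a) ≤ #(L (2 * k)) + #(L (2 * k + 2)))
    refine ⟨E', hE'L, hE', fun C' hE'C' hC'L hC'b => ?_⟩
    obtain ⟨C, hFEC, hCL, hCb⟩ : ∃ C, F ∪ E ⊆ C ∧ C ⊆ L (2 * k) ∧ #C = b :=
      Finset.exists_subsuperset_card_eq (Finset.union_subset hFL hEL)
        ((Finset.card_union_le F E).trans (by omega)) (by omega)
    have hfree : b ≤ #(B \ (C ∪ C')) := by
      have := hforce C C' (Finset.union_subset_right hFEC) hE'C'
      have := Finset.card_sdiff_add_card_inter B (C ∪ C')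
      omega
    obtain ⟨D, hDsub, hDb⟩ := Finset.exists_subset_card_eq hfree
    obtain ⟨c, hc, rfl⟩ := hF C (Finset.union_subset_left hFEC) hCL hCb
    obtain ⟨hDB, hDdisj⟩ := Finset.subset_sdiff.1 hDsub
    obtain ⟨hDc, hDC'⟩ := Finset.disjoint_union_right.1 hDdisj
    have hcD := hc.update_path (hDB.trans hBL) hDb hDc
    exact ⟨_, hcD.update_path hC'L hC'b (by simpa using hDC'.symm), Function.update_self ..⟩

theorem multicolorableOn_path (hab : 5 * b ≤ 2 * a) {L : ℕ → Finset α} {k : ℕ}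
    (heven : ∀ i ≤ 2 * k, Even i → a - b ≤ #(L i)) (hodd : ∀ i ≤ 2 * k, Odd i → a ≤ #(L i)) :
    MulticolorableOn (SimpleGraph.hasse ℕ) (Set.Iic (2 * k)) L b := by
  obtain ⟨F, hFL, hFcard, hF⟩ := exists_forcing_subset_path hab k heven hodd
  have hlast : a - b ≤ #(L (2 * k)) := heven _ le_rfl (even_two_mul k)
  obtain ⟨C, hFC, hCL, hCb⟩ := Finset.exists_subsuperset_card_eq hFL
    (by omega : #F ≤ b) (by omega)
  obtain ⟨c, hc, -⟩ := hF C hFC hCL hCb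
  exact ⟨c, hc⟩

/-- The vertices `p 0, p 1, …, p (2 * k)` of `R` are distinct, only consecutive ones are adjacent,
and outside of them each vertex in even position has at most one neighbour in `R` and each vertex
in odd position has none. Consecutive vertices need not be adjacent, since only upper bounds on
adjacency matter for colouring. -/
structure IsReduciblePath (G : SimpleGraph V) (R : Set V) (p : ℕ → V) (k : ℕ) : Prop where
  mem : ∀ i ≤ 2 * k, p i ∈ R
  injOn : Set.InjOn p (Set.Iic (2 * k))
  adj : ∀ i ≤ 2 * k, ∀ j ≤ 2 * k, G.Adj (p i) (p j) → (SimpleGraph.hasse ℕ).Adj i j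
  even : ∀ i ≤ 2 * k, Even i → ((R \ p '' Set.Iic (2 * k)) ∩ G.neighborSet (p i)).Subsingleton
  odd : ∀ i ≤ 2 * k, Odd i → (R \ p '' Set.Iic (2 * k)) ∩ G.neighborSet (p i) = ∅

variable {G : SimpleGraph V} {R : Set V} {L : V → Finset α} {p : ℕ → V} {k : ℕ}

lemma isReduciblePath_const {v : V} (hv : v ∈ R) (h : (R ∩ G.neighborSet v).Subsingleton) :
    IsReduciblePath G R (fun _ => v) 0 where
  mem _ _ := hv
  injOn i hi j hj _ := (Nat.le_zero.1 hi).trans (Nat.le_zero.1 hj).symm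
  adj _ _ _ _ hadj := absurd hadj G.irrefl
  even _ _ _ := h.anti (Set.inter_subset_inter_left _ Set.sdiff_subset)
  odd i hi hodd := by
    obtain rfl := Nat.le_zero.1 hi
    exact absurd hodd Nat.not_odd_zero

lemma IsReduciblePath.multicolorableOn (hp : IsReduciblePath G R p k) (hab : 5 * b ≤ 2 * a)
    (hL : ∀ v ∈ R, a ≤ #(L v))
    (h : MulticolorableOn G (R \ p '' Set.Iic (2 * k)) L b) : MulticolorableOn G R L b := by
  obtain ⟨c, hc⟩ := h
  refine (hc.multicolorableOn_union (T := p '' Set.Iic (2 * k)) ?_).mono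
    (Set.subset_sdiff_union R _)
  refine .image hp.injOn hp.adj (multicolorableOn_path hab (fun i hi heven => ?_)
    fun i hi hodd => ?_)
  · have hone := Set.encard_le_one_iff_subsingleton.2 (hp.even i hi heven)
    have := hc.card_sub_le_card_residualList (n := 1) (mod_cast hone)
    have := hL (p i) (hp.mem i hi)
    grind
  · have hnone := Set.encard_eq_zero.2 (hp.odd i hi hodd)
    have := hc.card_sub_le_card_residualList (n := 0) (mod_cast hnone.le)
    have := hL (p i) (hp.mem i hi)
    grind

theorem multicolorableOn_of_forall_exists_isReduciblePath (hab : 5 * b ≤ 2 * a)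
    (hfin : R.Finite) (hpath : ∀ S ⊆ R, S.Nonempty → ∃ p k, IsReduciblePath G S p k)
    (hL : ∀ v ∈ R, a ≤ #(L v)) : MulticolorableOn G R L b := by
  induction hn : R.ncard using Nat.strong_induction_on generalizing R with
  | _ n ih =>
    obtain rfl | hne := R.eq_empty_or_nonempty
    · exact multicolorableOn_empty G L b
    obtain ⟨p, k, hp⟩ := hpath R subset_rfl hne
    have hlt : (R \ p '' Set.Iic (2 * k)).ncard < n :=
      hn ▸ Set.ncard_lt_ncard (Set.sdiff_ssubset_left_iff.2
        ⟨p 0, hp.mem 0 (Nat.zero_le _), 0, Nat.zero_le _, rfl⟩) hfin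
    exact hp.multicolorableOn hab hL (ih _ hlt hfin.sdiff
      (fun S hS => hpath S (hS.trans Set.sdiff_subset)) (fun v hv => hL v hv.1) rfl)

end Path

section TriangularLattice

lemma not_adj_of_cliqueFreeOn_three {V : Type*} {G : SimpleGraph V} {R : Set V}
    (hR : G.CliqueFreeOn R 3) {u v w : V} (hu : u ∈ R) (hv : v ∈ R) (hw : w ∈ R)
    (huv : G.Adj u v) (huw : G.Adj u w) : ¬ G.Adj v w := by
  classical
  exact fun hvw => hR (t := {u, v, w}) (by simp [Set.insert_subset_iff, *])
    (SimpleGraph.is3Clique_triple_iff.2 ⟨huv, huw, hvw⟩)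

lemma exists_maximal_run {S : Set ℤ} (hfin : S.Finite) (hne : S.Nonempty) :
    ∃ (t : ℤ) (k : ℕ), 0 < k ∧ t - 1 ∉ S ∧ t + k ∉ S ∧ ∀ i < k, t + (i : ℤ) ∈ S := by
  obtain ⟨t, htS, hmin⟩ := S.exists_min_image id hfin hne
  have hgap : ∃ k : ℕ, t + k ∉ S := by
    by_contra! hall
    exact Set.infinite_of_injective_forall_mem
      (fun i j hij => Nat.cast_injective (add_left_cancel hij)) hall hfin
  classical
  refine ⟨t, Nat.find hgap, (Nat.find_pos hgap).2 (by simpa using htS), fun h => ?_,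
    Nat.find_spec hgap, fun i hi => not_not.1 (Nat.find_min hgap hi)⟩
  have : t ≤ t - 1 := hmin _ h
  omega

lemma triLattice_adj_iff {x y z w : ℤ} : triLattice.Adj (x, y) (z, w) ↔
    (z = x + 1 ∧ w = y) ∨ (z = x - 1 ∧ w = y) ∨ (z = x ∧ w = y + 1) ∨ (z = x ∧ w = y - 1) ∨
      (z = x - 1 ∧ w = y + 1) ∨ (z = x + 1 ∧ w = y - 1) := by
  simp only [triLattice, SimpleGraph.fromRel_adj, Set.mem_insert_iff, Set.mem_singleton_iff,
    Prod.mk_sub_mk, Prod.mk.injEq, ne_eq]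
  omega

/-- The lattice path from `v` whose steps are alternately `(0, 1)` and `(1, 0)`. -/
def zigzag (v : ℤ × ℤ) (i : ℕ) : ℤ × ℤ :=
  (v.1 + (i / 2 : ℕ), v.2 + ((i + 1) / 2 : ℕ))

lemma zigzag_two_mul (x y : ℤ) (j : ℕ) : zigzag (x, y) (2 * j) = (x + j, y + j) := by
  ext <;> simp only [zigzag] <;> omega

lemma zigzag_two_mul_add_one (x y : ℤ) (j : ℕ) :
    zigzag (x, y) (2 * j + 1) = (x + j, y + 1 + j) := by
  ext <;> simp only [zigzag] <;> omega

lemma zigzag_injective (v : ℤ × ℤ) : Function.Injective (zigzag v) := by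
  intro i j hij
  simp only [zigzag, Prod.mk.injEq] at hij
  omega

lemma hasse_adj_of_triLattice_adj_zigzag {v : ℤ × ℤ} {i j : ℕ}
    (h : triLattice.Adj (zigzag v i) (zigzag v j)) : (SimpleGraph.hasse ℕ).Adj i j := by
  rw [zigzag, zigzag, triLattice_adj_iff] at h
  rw [hasse_nat_adj]
  omega

variable {R S : Set (ℤ × ℤ)} {x y m t : ℤ} {k : ℕ}

lemma subsingleton_neighbors (hR : triLattice.CliqueFreeOn R 3) (hv : (x, y) ∈ R) (hSR : S ⊆ R)
    (hS : S ∩ triLattice.neighborSet (x, y) ⊆ {(x + 1, y), (x, y - 1), (x + 1, y - 1)})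
    (hnot : ¬((x + 1, y) ∈ R ∧ (x, y - 1) ∈ R)) :
    (S ∩ triLattice.neighborSet (x, y)).Subsingleton := by
  intro u hu w hw
  have htri : ¬ triLattice.Adj u w :=
    not_adj_of_cliqueFreeOn_three hR hv (hSR hu.1) (hSR hw.1) hu.2 hw.2
  obtain rfl | rfl | rfl := hS hu <;> obtain rfl | rfl | rfl := hS hw
  case inl.inr.inl => exact absurd ⟨hSR hu.1, hSR hw.1⟩ hnot
  case inr.inl.inl => exact absurd ⟨hSR hw.1, hSR hu.1⟩ hnot
  all_goals first | rfl | exact absurd (triLattice_adj_iff.2 (by simp)) htri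

lemma neighbors_subset_of_top (hmax : ∀ v ∈ R, v.2 - v.1 ≤ y - x) :
    R ∩ triLattice.neighborSet (x, y) ⊆ {(x + 1, y), (x, y - 1), (x + 1, y - 1)} := by
  rintro ⟨z, w⟩ ⟨hz, hadj⟩
  have hle : w - z ≤ y - x := hmax _ hz
  rw [SimpleGraph.mem_neighborSet, triLattice_adj_iff] at hadj
  simp only [Set.mem_insert_iff, Set.mem_singleton_iff, Prod.mk.injEq]
  omega

lemma neighbors_subset_pair_of_top (hR : triLattice.CliqueFreeOn R 3) (hv : (x, y) ∈ R)
    (hmax : ∀ v ∈ R, v.2 - v.1 ≤ y - x) (hright : (x + 1, y) ∈ R) :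
    R ∩ triLattice.neighborSet (x, y) ⊆ {(x + 1, y), (x, y - 1)} := by
  intro u hu
  obtain rfl | rfl | rfl := neighbors_subset_of_top hmax hu
  · exact .inl rfl
  · exact .inr rfl
  · exact absurd (triLattice_adj_iff.2 (by simp)) (not_adj_of_cliqueFreeOn_three hR hv hright hu.1
      (triLattice_adj_iff.2 (by simp)) hu.2)

lemma neighbors_subset_of_below_top (hmax : ∀ v ∈ R, v.2 - v.1 ≤ y - x + 1) :
    (R \ {(x - 1, y), (x, y + 1)}) ∩ triLattice.neighborSet (x, y) ⊆
      {(x + 1, y), (x, y - 1), (x + 1, y - 1)} := by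
  rintro ⟨z, w⟩ ⟨⟨hz, hzne⟩, hadj⟩
  have hle : w - z ≤ y - x + 1 := hmax _ hz
  rw [SimpleGraph.mem_neighborSet, triLattice_adj_iff] at hadj
  simp only [Set.mem_insert_iff, Set.mem_singleton_iff, Prod.mk.injEq] at hzne ⊢
  omega

lemma not_both_lower_neighbors_of_upper_neighbor (hR : triLattice.CliqueFreeOn R 3)
    (hv : (x, y) ∈ R) (htop : (x - 1, y) ∈ R ∨ (x, y + 1) ∈ R) :
    ¬((x + 1, y) ∈ R ∧ (x, y - 1) ∈ R) := by
  rintro ⟨hright, hbelow⟩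
  obtain hleft | habove := htop
  · exact not_adj_of_cliqueFreeOn_three hR hv hleft hbelow (triLattice_adj_iff.2 (by simp))
      (triLattice_adj_iff.2 (by simp)) (triLattice_adj_iff.2 (by simp))
  · exact not_adj_of_cliqueFreeOn_three hR hv habove hright (triLattice_adj_iff.2 (by simp))
      (triLattice_adj_iff.2 (by simp)) (triLattice_adj_iff.2 (by simp))

lemma zigzag_mem (hboth : ∀ s, (s, s + m) ∈ R → (s + 1, s + m) ∈ R ∧ (s, s + m - 1) ∈ R)
    (hk : 0 < k) (hrun : ∀ j < k, (t + (j : ℤ), t + j + m) ∈ R) {i : ℕ} (hi : i ≤ 2 * k) :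
    zigzag (t, t + m - 1) i ∈ R := by
  obtain ⟨j, rfl | rfl⟩ := i.even_or_odd'
  · rw [zigzag_two_mul]
    obtain - | j := j
    · simpa using (hboth _ (hrun 0 hk)).2
    · convert (hboth _ (hrun j (by omega))).1 using 2 <;> push_cast <;> ring
  · rw [zigzag_two_mul_add_one]
    convert hrun j (by omega) using 2
    ring

lemma mem_image_zigzag {s : ℤ} (hs : (s, s + m) ∈ R) (hstart : (t - 1, t - 1 + m) ∉ R)
    (hend : (t + (k : ℤ), t + k + m) ∉ R) (hts : t - 1 ≤ s) (hst : s ≤ t + k) :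
    (s, s + m) ∈ zigzag (t, t + m - 1) '' Set.Iic (2 * k) := by
  have hne : s ≠ t - 1 := by
    rintro rfl
    exact hstart hs
  have hne' : s ≠ t + k := by
    rintro rfl
    exact hend hs
  refine ⟨2 * (s - t).toNat + 1, Set.mem_Iic.2 (by omega), ?_⟩
  rw [zigzag_two_mul_add_one]
  ext <;> simp only <;> omega

lemma subsingleton_neighbors_zigzag_two_mul (hR : triLattice.CliqueFreeOn R 3)
    (hmax : ∀ v ∈ R, v.2 - v.1 ≤ m) (hk : 0 < k) (hstart : (t - 1, t - 1 + m) ∉ R)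
    (hend : (t + (k : ℤ), t + k + m) ∉ R) (hrun : ∀ j < k, (t + (j : ℤ), t + j + m) ∈ R)
    {j : ℕ} (hj : j ≤ k) (hmem : zigzag (t, t + m - 1) (2 * j) ∈ R) :
    ((R \ zigzag (t, t + m - 1) '' Set.Iic (2 * k)) ∩
      triLattice.neighborSet (zigzag (t, t + m - 1) (2 * j))).Subsingleton := by
  have hleft : (t + (j : ℤ) - 1, t + m - 1 + j) = (t + j - 1, t + j - 1 + m) := by
    ext <;> ring
  have habove : (t + (j : ℤ), t + m - 1 + j + 1) = (t + j, t + j + m) := by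
    ext <;> ring
  rw [zigzag_two_mul] at hmem ⊢
  have hsub : R \ zigzag (t, t + m - 1) '' Set.Iic (2 * k) ⊆
      R \ {(t + (j : ℤ) - 1, t + m - 1 + j), (t + (j : ℤ), t + m - 1 + j + 1)} := by
    rintro v ⟨hvR, hvp⟩
    refine ⟨hvR, ?_⟩
    rw [hleft, habove]
    rintro (rfl | rfl) <;>
      exact hvp (mem_image_zigzag hvR hstart hend (by omega) (by omega))
  have hupper : (t + (j : ℤ) - 1, t + m - 1 + j) ∈ R ∨ (t + (j : ℤ), t + m - 1 + j + 1) ∈ R := by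
    rw [hleft, habove]
    obtain - | j := j
    · exact .inr (hrun 0 hk)
    · refine .inl ?_
      convert hrun j hj using 2 <;> push_cast <;> ring
  exact (subsingleton_neighbors hR hmem Set.sdiff_subset
    (neighbors_subset_of_below_top fun v hv => (hmax v hv).trans_eq (by ring))
    (not_both_lower_neighbors_of_upper_neighbor hR hmem hupper)).anti
      (Set.inter_subset_inter_left _ hsub)

lemma neighbors_zigzag_two_mul_add_one_subset (hR : triLattice.CliqueFreeOn R 3)
    (hmax : ∀ v ∈ R, v.2 - v.1 ≤ m) {j : ℕ} (hmem : zigzag (t, t + m - 1) (2 * j + 1) ∈ R)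
    (hnext : zigzag (t, t + m - 1) (2 * (j + 1)) ∈ R) :
    R ∩ triLattice.neighborSet (zigzag (t, t + m - 1) (2 * j + 1)) ⊆
      {zigzag (t, t + m - 1) (2 * (j + 1)), zigzag (t, t + m - 1) (2 * j)} := by
  have hright : zigzag (t, t + m - 1) (2 * (j + 1)) = (t + (j : ℤ) + 1, t + m - 1 + 1 + j) := by
    rw [zigzag_two_mul]
    ext <;> push_cast <;> ring
  have hbelow : zigzag (t, t + m - 1) (2 * j) = (t + (j : ℤ), t + m - 1 + 1 + j - 1) := by
    rw [zigzag_two_mul]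
    ext <;> ring
  rw [zigzag_two_mul_add_one] at hmem ⊢
  rw [hright] at hnext ⊢
  rw [hbelow]
  exact neighbors_subset_pair_of_top hR hmem (fun v hv => (hmax v hv).trans_eq (by ring)) hnext

theorem isReduciblePath_zigzag (hR : triLattice.CliqueFreeOn R 3)
    (hmax : ∀ v ∈ R, v.2 - v.1 ≤ m)
    (hboth : ∀ s, (s, s + m) ∈ R → (s + 1, s + m) ∈ R ∧ (s, s + m - 1) ∈ R)
    (hk : 0 < k) (hstart : (t - 1, t - 1 + m) ∉ R) (hend : (t + (k : ℤ), t + k + m) ∉ R)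
    (hrun : ∀ j < k, (t + (j : ℤ), t + j + m) ∈ R) :
    IsReduciblePath triLattice R (zigzag (t, t + m - 1)) k := by
  have hmem : ∀ i ≤ 2 * k, zigzag (t, t + m - 1) i ∈ R := fun i => zigzag_mem hboth hk hrun
  refine ⟨hmem, (zigzag_injective _).injOn, fun i _ j _ => hasse_adj_of_triLattice_adj_zigzag,
    ?_, ?_⟩
  · intro i hi heven
    obtain ⟨j, rfl⟩ := even_iff_exists_two_mul.1 heven
    exact subsingleton_neighbors_zigzag_two_mul hR hmax hk hstart hend hrun (by omega) (hmem _ hi)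
  · rintro i hi ⟨j, rfl⟩
    rw [Set.eq_empty_iff_forall_notMem]
    rintro v ⟨⟨hvR, hvp⟩, hadj⟩
    obtain rfl | rfl := neighbors_zigzag_two_mul_add_one_subset hR hmax (hmem _ hi)
      (hmem _ (by omega)) ⟨hvR, hadj⟩
    · exact hvp ⟨2 * (j + 1), Set.mem_Iic.2 (by omega), rfl⟩
    · exact hvp ⟨2 * j, Set.mem_Iic.2 (by omega), rfl⟩

theorem exists_isReduciblePath (hR : triLattice.CliqueFreeOn R 3) (hfin : R.Finite)
    (hne : R.Nonempty) : ∃ p k, IsReduciblePath triLattice R p k := by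
  obtain ⟨⟨x, y⟩, hv, hmax⟩ := R.exists_max_image (fun v => v.2 - v.1) hfin hne
  by_cases hboth : ∀ s, (s, s + (y - x)) ∈ R →
      (s + 1, s + (y - x)) ∈ R ∧ (s, s + (y - x) - 1) ∈ R
  · have hinj : Function.Injective fun s : ℤ => (s, s + (y - x)) :=
      fun _ _ h => congrArg Prod.fst h
    obtain ⟨t, k, hk, hstart, hend, hrun⟩ :=
      exists_maximal_run (hfin.preimage hinj.injOn) ⟨x, by simpa using hv⟩
    exact ⟨_, k, isReduciblePath_zigzag hR hmax hboth hk hstart hend hrun⟩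
  · push Not at hboth
    obtain ⟨s, hs, hnot⟩ := hboth
    exact ⟨_, 0, isReduciblePath_const hs (subsingleton_neighbors hR hs subset_rfl
      (neighbors_subset_of_top (by simpa using hmax)) fun h => hnot h.1 h.2)⟩

end TriangularLattice

theorem triangleFree_subgraph_of_triLattice_in_Ch_five_halves (R : Set (ℤ × ℤ))
    (htf : (triLattice.induce R).CliqueFree 3) :
    ∀ a b : ℕ, 0 < b → (a : ℚ) / b ≥ 5 / 2 → Choosable (triLattice.induce R) a b := by
  intro a b hb hab
  have hratio : 5 * b ≤ 2 * a := by
    have hb' : (0 : ℚ) < b := mod_cast hb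
    have := (le_div_iff₀ hb').1 hab
    exact_mod_cast (by linarith : (5 * b : ℚ) ≤ 2 * a)
  rw [SimpleGraph.cliqueFree_induce_iff] at htf
  refine choosable_induce_of_multicolorableOn fun L hL =>
    multicolorableOn_of_forall_finite_subset fun S hS hfin =>
      multicolorableOn_of_forall_exists_isReduciblePath hratio hfin (fun T hT hne => ?_)
        fun v hv => (hL v (hS hv)).ge
  exact exists_isReduciblePath (htf.subset _ (hT.trans hS)) (hfin.subset hT) hne
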